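/- Let m, q, r be positive integers, l an integer, and ε ∈ {+1, −1}. Writing ξ_a = exp(2πi/a), one has Σ_{n=1}^{m} ξ_m^{(qr)n² + (ql+ε)n} = ξ_8 · ξ_{16mqr}^{−4(ql+ε)²} · √(m/(2qr)) · Σ_{n=1}^{2qr} ξ_{4qr}^{−mn² − 2(ql+ε)n}, an identity of complex numbers. (The rewritten Gauss sum identity displayed in Section 5 of the paper.) -/

import Mathlib

open Complex Real

/-!
Let `τ = a / c + i t` with `t → 0⁺`. The terms of `θ (b / 2c, τ)` are a `c`-periodic phase times a
Gaussian of width `1 / √t`, so averaging over residue classes gives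
`√t θ (b / 2c, τ) → G(a, b, c) / c`. The functional equation of `θ` turns the same function into a
series in which the Gaussian has complex width and the phase has period `a`, and the same averaging
gives a multiple of the dual sum `G(-c, -b, a)`. Equating the two limits is the reciprocity law.
-/

open Filter Topology Function

lemma ofReal_mul_cpow {x : ℝ} (hx : 0 < x) (w s : ℂ) :
    ((x : ℂ) * w) ^ s = (x : ℂ) ^ s * w ^ s := by
  rcases eq_or_ne w 0 with rfl | hw
  · rcases eq_or_ne s 0 with rfl | hs <;> simp [*]
  have hx' : (x : ℂ) ≠ 0 := ofReal_ne_zero.2 hx.ne'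
  rw [cpow_def_of_ne_zero (mul_ne_zero hx' hw), cpow_def_of_ne_zero hx', cpow_def_of_ne_zero hw,
    Complex.log_ofReal_mul hx hw, ofReal_log hx.le, add_mul, Complex.exp_add]

lemma ofReal_cpow_half {x : ℝ} (hx : 0 ≤ x) : (x : ℂ) ^ (1 / 2 : ℂ) = (√x : ℝ) := by
  rw [Real.sqrt_eq_rpow, ofReal_cpow hx]
  norm_num

lemma tendsto_jacobiTheta₂_nhds_one {ι : Type*} {l : Filter ι} (z : ℂ) {τ : ι → ℂ}
    (hτ : Tendsto (fun i => (τ i).im) l atTop) :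
    Tendsto (fun i => jacobiTheta₂ z (τ i)) l (𝓝 1) := by
  have tendsto_term (n : ℤ) : Tendsto (fun i => jacobiTheta₂_term n z (τ i)) l
      (𝓝 (if n = 0 then 1 else 0)) := by
    rcases eq_or_ne n 0 with rfl | hn
    · simp [jacobiTheta₂_term, tendsto_const_nhds]
    · rw [if_neg hn, tendsto_zero_iff_norm_tendsto_zero]
      simp only [norm_jacobiTheta₂_term]
      have hn' : -π * (n : ℝ) ^ 2 < 0 := by
        have : 0 < (n : ℝ) ^ 2 := by positivity
        nlinarith [Real.pi_pos]
      exact Real.tendsto_exp_atBot.comp <|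
        tendsto_atBot_add_const_right _ _ (hτ.const_mul_atTop_of_neg hn')
  have h := tendsto_tsum_of_dominated_convergence
    (by simpa using summable_pow_mul_jacobiTheta₂_term_bound |z.im| one_pos 0) tendsto_term
    ((hτ.eventually_ge_atTop 1).mono fun _ hi => norm_jacobiTheta₂_term_le one_pos le_rfl hi)
  rwa [tsum_ite_eq] at h

lemma cexp_neg_mul_add_sq_eq (u s : ℂ) (n : ℤ) :
    cexp (-π * u * (n + s) ^ 2) =
      cexp (-π * u * s ^ 2) * jacobiTheta₂_term n (s * (I * u)) (I * u) := by
  rw [jacobiTheta₂_term, ← Complex.exp_add]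
  congr 1
  linear_combination (-2 * π * n * s * u - π * n ^ 2 * u) * I_sq

lemma summable_cexp_neg_mul_add_sq {u : ℂ} (hu : 0 < u.re) (s : ℂ) :
    Summable fun n : ℤ => cexp (-π * u * (n + s) ^ 2) := by
  simp only [cexp_neg_mul_add_sq_eq]
  exact ((summable_jacobiTheta₂_term_iff _ _).2 (by simpa using hu)).mul_left _

lemma tsum_cexp_neg_mul_add_sq {u : ℂ} (hu : u ≠ 0) (s : ℂ) :
    ∑' n : ℤ, cexp (-π * u * (n + s) ^ 2) = 1 / u ^ (1 / 2 : ℂ) * jacobiTheta₂ s (I / u) := by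
  have h_sqrt : -I * (I * u) = u := by linear_combination -u * I_sq
  have h_exp : -π * I * (s * (I * u)) ^ 2 / (I * u) = -(-π * u * s ^ 2) := by
    field_simp
    linear_combination -s ^ 2 * I_sq
  have h_fst : s * (I * u) / (I * u) = s := by field_simp
  have h_snd : -1 / (I * u) = I / u := by
    field_simp
    exact I_sq.symm
  simp only [cexp_neg_mul_add_sq_eq]
  rw [tsum_mul_left, ← jacobiTheta₂, jacobiTheta₂_functional_equation, h_sqrt, h_exp, h_fst, h_snd,
    Complex.exp_neg]
  field_simp

lemma norm_le_sum_norm_of_periodic {E : Type*} [SeminormedAddGroup E] {N : ℕ} (hN : 0 < N)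
    {f : ℤ → E} (hf : Periodic f N) (n : ℤ) : ‖f n‖ ≤ ∑ r ∈ Finset.range N, ‖f r‖ := by
  have hmod : f (n % N) = f n := by
    rw [Int.emod_def, mul_comm]
    exact hf.sub_int_mul_eq (n / N)
  obtain ⟨r, hr⟩ := Int.eq_ofNat_of_zero_le (Int.emod_nonneg n (by positivity : (N : ℤ) ≠ 0))
  have hrN : r < N := by exact_mod_cast hr ▸ Int.emod_lt_of_pos n (by positivity : 0 < (N : ℤ))
  rw [← hmod, hr]
  exact Finset.single_le_sum (f := fun r : ℕ => ‖f r‖) (fun _ _ => norm_nonneg _)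
    (Finset.mem_range.2 hrN)

lemma tsum_periodic_mul {𝕜 : Type*} [NormedField 𝕜] [CompleteSpace 𝕜] {N : ℕ} (hN : 0 < N)
    {f g : ℤ → 𝕜} (hf : Periodic f N) (hg : Summable fun n => ‖g n‖) :
    ∑' n, f n * g n = ∑ r ∈ Finset.range N, f r * ∑' k : ℤ, g (k * N + r) := by
  have : NeZero N := ⟨hN.ne'⟩
  have hfg : Summable fun n => f n * g n := by
    refine (hg.mul_left (∑ r ∈ Finset.range N, ‖f r‖)).of_norm_bounded fun n => ?_
    rw [norm_mul]
    exact mul_le_mul_of_nonneg_right (norm_le_sum_norm_of_periodic hN hf n) (norm_nonneg _)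
  let e : Fin N × ℤ ≃ ℤ := ((Int.divModEquiv N).trans (Equiv.prodComm _ _)).symm
  calc ∑' n, f n * g n = ∑' x, f (e x) * g (e x) := (e.tsum_eq fun n => f n * g n).symm
    _ = ∑' (r : Fin N) (k : ℤ), f (e (r, k)) * g (e (r, k)) := (e.summable_iff.2 hfg).tsum_prod
    _ = ∑ r : Fin N, f (r : ℕ) * ∑' k : ℤ, g (k * N + (r : ℕ)) := by
      rw [tsum_fintype]
      refine Finset.sum_congr rfl fun r _ => ?_
      rw [← tsum_mul_left]
      refine tsum_congr fun k => ?_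
      have hfe : f (e (r, k)) = f (r : ℕ) := by
        simpa [e, add_comm] using hf.int_mul k (r : ℕ)
      rw [hfe]
      simp [e]
    _ = _ := Fin.sum_univ_eq_sum_range (fun r : ℕ => f r * ∑' k : ℤ, g (k * N + r)) N

lemma cpow_half_mul_tsum_periodic {N : ℕ} (hN : 0 < N) {f : ℤ → ℂ} (hf : Periodic f N)
    {u : ℂ} (hu : 0 < u.re) (s : ℂ) :
    u ^ (1 / 2 : ℂ) * ∑' n : ℤ, f n * cexp (-π * u * (n + s) ^ 2) =
      (∑ r ∈ Finset.range N, f r * jacobiTheta₂ ((r + s) / N) (I / (N ^ 2 * u))) / N := by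
  have hu0 : u ≠ 0 := by rintro rfl; simp at hu
  have hN0 : (N : ℂ) ≠ 0 := by exact_mod_cast hN.ne'
  have hcpow : u ^ (1 / 2 : ℂ) ≠ 0 := by simp [cpow_eq_zero_iff, hu0]
  have h_sqrt : ((N : ℂ) ^ 2 * u) ^ (1 / 2 : ℂ) = N * u ^ (1 / 2 : ℂ) := by
    have : (N : ℂ) ^ 2 = ((N ^ 2 : ℝ) : ℂ) := by push_cast; rfl
    rw [this, ofReal_mul_cpow (by positivity), ofReal_cpow_half (by positivity),
      Real.sqrt_sq (by positivity), ofReal_natCast]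
  have h_class (r : ℕ) : ∑' k : ℤ, cexp (-π * u * ((k * N + r : ℤ) + s) ^ 2) =
      1 / (N * u ^ (1 / 2 : ℂ)) * jacobiTheta₂ ((r + s) / N) (I / (N ^ 2 * u)) := by
    rw [← h_sqrt, ← tsum_cexp_neg_mul_add_sq (mul_ne_zero (pow_ne_zero 2 hN0) hu0)]
    refine tsum_congr fun k => ?_
    congr 1
    push_cast
    field_simp
    ring
  rw [tsum_periodic_mul hN hf (summable_cexp_neg_mul_add_sq hu s).norm, Finset.mul_sum,
    Finset.sum_div]
  refine Finset.sum_congr rfl fun r _ => ?_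
  rw [h_class]
  field_simp

lemma inv_re_pos_iff {z : ℂ} : 0 < z⁻¹.re ↔ 0 < z.re := by
  rcases eq_or_ne z 0 with rfl | hz
  · simp
  · rw [inv_re, div_pos_iff_of_pos_right (normSq_pos.2 hz)]

lemma sum_Icc_one_eq_sum_range {M : Type*} [AddCommMonoid M] {f : ℕ → M} {N : ℕ}
    (h : f N = f 0) : ∑ n ∈ Finset.Icc 1 N, f n = ∑ n ∈ Finset.range N, f n := by
  rcases N with _ | N
  · simp
  · rw [← Finset.Ico_add_one_right_eq_Icc, Finset.sum_Ico_eq_sum_range, Finset.sum_range_succ' f,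
      ← h]
    simp [Finset.sum_range_succ, add_comm 1]

lemma tendsto_cpow_half_mul_tsum_periodic {ι : Type*} {l : Filter ι} {N : ℕ} (hN : 0 < N)
    {f : ℤ → ℂ} (hf : Periodic f N) {u : ι → ℂ} (hu : Tendsto (fun i => (u i)⁻¹.re) l atTop)
    (s : ℂ) :
    Tendsto (fun i => u i ^ (1 / 2 : ℂ) * ∑' n : ℤ, f n * cexp (-π * u i * (n + s) ^ 2)) l
      (𝓝 ((∑ r ∈ Finset.Icc 1 N, f r) / N)) := by
  have h_im : Tendsto (fun i => (I / (N ^ 2 * u i)).im) l atTop := by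
    have hN' : (0 : ℝ) < ((N : ℝ) ^ 2)⁻¹ := by positivity
    refine (hu.const_mul_atTop hN').congr fun i => ?_
    rw [← re_ofReal_mul, ← I_mul_im, div_eq_mul_inv, mul_inv]
    push_cast
    rfl
  have h_theta (r : ℕ) :
      Tendsto (fun i => f r * jacobiTheta₂ ((r + s) / N) (I / (N ^ 2 * u i))) l (𝓝 (f r)) := by
    simpa only [mul_one] using (tendsto_jacobiTheta₂_nhds_one ((r + s) / N) h_im).const_mul (f r)
  have h_sum := tendsto_finsetSum (Finset.range N) fun r _ => h_theta r
  rw [sum_Icc_one_eq_sum_range (f := fun r : ℕ => f r) (by simpa using hf.eq)]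
  refine (h_sum.div_const (N : ℂ)).congr' ?_
  filter_upwards [hu.eventually_gt_atTop 0] with i hi
  have hre : 0 < (u i).re := by simpa using inv_re_pos_iff.1 hi
  exact (cpow_half_mul_tsum_periodic hN hf hre s).symm

lemma tendsto_sqrt_mul_tsum_periodic {N : ℕ} (hN : 0 < N) {f : ℤ → ℂ} (hf : Periodic f N)
    {w : ℝ → ℂ} {w₀ : ℂ} (hw₀ : 0 < w₀.re) (hw : Tendsto w (𝓝[>] 0) (𝓝 w₀)) (s : ℂ) :
    Tendsto (fun t : ℝ => √t * ∑' n : ℤ, f n * cexp (-π * (t * w t) * (n + s) ^ 2)) (𝓝[>] 0)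
      (𝓝 ((∑ r ∈ Finset.Icc 1 N, f r) / N / w₀ ^ (1 / 2 : ℂ))) := by
  have hw₀_ne : w₀ ≠ 0 := by rintro rfl; simp at hw₀
  have h_inv : Tendsto (fun t : ℝ => (t * w t)⁻¹.re) (𝓝[>] 0) atTop := by
    have h_re : Tendsto (fun t => (w t)⁻¹.re) (𝓝[>] 0) (𝓝 w₀⁻¹.re) :=
      (continuous_re.tendsto _).comp (hw.inv₀ hw₀_ne)
    refine (tendsto_inv_nhdsGT_zero.atTop_mul_pos (inv_re_pos_iff.2 hw₀) h_re).congr fun t => ?_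
    rw [mul_inv, ← ofReal_inv, re_ofReal_mul]
  have h_cpow : Tendsto (fun t => w t ^ (1 / 2 : ℂ)) (𝓝[>] 0) (𝓝 (w₀ ^ (1 / 2 : ℂ))) :=
    hw.cpow tendsto_const_nhds (.inl hw₀)
  have h_ne : w₀ ^ (1 / 2 : ℂ) ≠ 0 := by simp [cpow_eq_zero_iff, hw₀_ne]
  refine ((tendsto_cpow_half_mul_tsum_periodic hN hf h_inv s).div h_cpow h_ne).congr' ?_
  filter_upwards [eventually_mem_nhdsWithin, h_cpow.eventually_ne h_ne] with t ht hwt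
  rw [Pi.div_apply, ofReal_mul_cpow ht, ofReal_cpow_half (le_of_lt ht)]
  field_simp

/-- The summand `exp (π i (a n² + b n) / c)` of a generalized quadratic Gauss sum. Half-periods are
allowed (`π i` rather than `2 π i`), so it is `c`-periodic in `n` only when `a * c + b` is even. -/
noncomputable def quadraticPhase (a b : ℤ) (c : ℕ) (n : ℤ) : ℂ :=
  cexp (π * I * (a * n ^ 2 + b * n) / c)

/-- The generalized quadratic Gauss sum `∑ exp (π i (a n² + b n) / c)` over `1 ≤ n ≤ c`. For odd
`a * c + b` the summand is not `c`-periodic, and the value depends on this choice of range. -/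
noncomputable def quadraticGaussSum (a b : ℤ) (c : ℕ) : ℂ :=
  ∑ n ∈ Finset.Icc 1 c, quadraticPhase a b c n

lemma quadraticPhase_periodic {a b : ℤ} {c : ℕ} (hc : 0 < c) (h : Even (a * c + b)) :
    Periodic (quadraticPhase a b c) c := by
  intro n
  obtain ⟨k, hk⟩ := h
  have hc0 : (c : ℂ) ≠ 0 := by exact_mod_cast hc.ne'
  have hk' : (a * c + b : ℂ) = k + k := by exact_mod_cast hk
  have h_exp : π * I * (a * (n + c : ℤ) ^ 2 + b * (n + c : ℤ)) / c =
      π * I * (a * n ^ 2 + b * n) / c + (a * n + k : ℤ) * (2 * π * I) := by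
    push_cast
    field_simp
    linear_combination (c : ℂ) * hk'
  rw [quadraticPhase, h_exp, Complex.exp_add, exp_int_mul_two_pi_mul_I, mul_one, quadraticPhase]

lemma tendsto_sqrt_mul_jacobiTheta₂ {a b : ℤ} {c : ℕ} (hc : 0 < c) (h : Even (a * c + b)) :
    Tendsto (fun t : ℝ => √t * jacobiTheta₂ (b / (2 * c)) (a / c + I * t)) (𝓝[>] 0)
      (𝓝 (quadraticGaussSum a b c / c)) := by
  have h_gauss := tendsto_sqrt_mul_tsum_periodic hc (quadraticPhase_periodic hc h)
    (w₀ := 1) (by simp) tendsto_const_nhds 0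
  rw [one_cpow, div_one] at h_gauss
  refine h_gauss.congr fun t => ?_
  have hc0 : (c : ℂ) ≠ 0 := by exact_mod_cast hc.ne'
  rw [jacobiTheta₂]
  congr 1
  refine tsum_congr fun n => ?_
  rw [quadraticPhase, jacobiTheta₂_term, ← Complex.exp_add]
  congr 1
  field_simp
  linear_combination (-n ^ 2 * t * c) * I_sq

lemma jacobiTheta₂_div_add_I_mul {a c : ℕ} (ha : 0 < a) (hc : 0 < c) (b : ℤ) {t : ℝ} (ht : 0 < t) :
    jacobiTheta₂ (b / (2 * c)) (a / c + I * t) =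
      (I / (a / c + I * t)) ^ (1 / 2 : ℂ) * cexp (-π * I * b ^ 2 / (4 * a * c)) *
        ∑' n : ℤ, quadraticPhase (-c) (-b) a n *
          cexp (-π * (t * (c / (a * (a / c + I * t)))) * (n + b / (2 * c)) ^ 2) := by
  set τ : ℂ := a / c + I * t with hτ
  have ha0 : (a : ℂ) ≠ 0 := by exact_mod_cast ha.ne'
  have hc0 : (c : ℂ) ≠ 0 := by exact_mod_cast hc.ne'
  have hτ0 : τ ≠ 0 := fun h => by simpa [τ, ht.ne'] using congrArg im h
  have h_cpow : (I / τ) ^ (1 / 2 : ℂ) ≠ 0 := by simp [cpow_eq_zero_iff, hτ0]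
  have h_split : I / τ = I * c / a + t * (c / (a * τ)) := by
    field_simp
    rw [hτ]
    field_simp
    linear_combination (- c * t) * I_sq
  have h_theta := tsum_cexp_neg_mul_add_sq (div_ne_zero I_ne_zero hτ0) (b / (2 * c))
  rw [div_div_cancel₀ I_ne_zero, eq_comm, one_div_mul_eq_div, div_eq_iff h_cpow] at h_theta
  have h_term (n : ℤ) : cexp (-π * (I / τ) * (n + b / (2 * c)) ^ 2) =
      cexp (-π * I * b ^ 2 / (4 * a * c)) * (quadraticPhase (-c) (-b) a n *
        cexp (-π * (t * (c / (a * τ))) * (n + b / (2 * c)) ^ 2)) := by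
    rw [quadraticPhase, ← Complex.exp_add, ← Complex.exp_add, h_split]
    congr 1
    push_cast
    field_simp
    ring
  rw [h_theta, tsum_congr h_term, tsum_mul_left]
  ring

lemma tendsto_sqrt_mul_jacobiTheta₂_dual {a c : ℕ} {b : ℤ} (ha : 0 < a) (hc : 0 < c)
    (h : Even (a * c + b)) :
    Tendsto (fun t : ℝ => √t * jacobiTheta₂ (b / (2 * c)) (a / c + I * t)) (𝓝[>] 0)
      (𝓝 ((I * (c / a : ℝ)) ^ (1 / 2 : ℂ) * cexp (-π * I * b ^ 2 / (4 * a * c)) *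
        (quadraticGaussSum (-c) (-b) a / c))) := by
  have ha0 : (a : ℂ) ≠ 0 := by exact_mod_cast ha.ne'
  have hc0 : (c : ℂ) ≠ 0 := by exact_mod_cast hc.ne'
  have hca : 0 < (c / a : ℝ) := by positivity
  have h_even : Even (-(c : ℤ) * a + -b) := by
    have : -(c : ℤ) * a + -b = -(a * c + b) := by ring
    exact this ▸ h.neg
  have hτ : Tendsto (fun t : ℝ => (a / c + I * t : ℂ)) (𝓝[>] 0) (𝓝 (a / c)) := by
    have hcont : Continuous fun t : ℝ => (a / c + I * t : ℂ) := by fun_prop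
    simpa using (hcont.tendsto 0).mono_left nhdsWithin_le_nhds
  have h_weight : Tendsto (fun t : ℝ => (c / (a * (a / c + I * t)) : ℂ)) (𝓝[>] 0)
      (𝓝 (((c / a : ℝ) : ℂ) ^ 2)) := by
    have h_lim : ((c / a : ℝ) : ℂ) ^ 2 = c / (a * (a / c)) := by
      push_cast
      field_simp
    rw [h_lim]
    exact tendsto_const_nhds.div (hτ.const_mul (a : ℂ)) (mul_ne_zero ha0 (div_ne_zero ha0 hc0))
  have h_prefactor : Tendsto (fun t : ℝ => (I / (a / c + I * t) : ℂ) ^ (1 / 2 : ℂ)) (𝓝[>] 0)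
      (𝓝 ((I * (c / a : ℝ)) ^ (1 / 2 : ℂ))) := by
    refine Tendsto.cpow ?_ tendsto_const_nhds (.inr ?_)
    · have h_lim : I * (c / a : ℝ) = I / (a / c) := by
        push_cast
        field_simp
      rw [h_lim]
      exact tendsto_const_nhds.div hτ (div_ne_zero ha0 hc0)
    · rw [I_mul_im, ofReal_re]
      exact hca.ne'
  have h_gauss := tendsto_sqrt_mul_tsum_periodic ha (quadraticPhase_periodic ha h_even)
    (by rw [← ofReal_pow, ofReal_re]; positivity) h_weight (b / (2 * c))
  rw [one_div, sq_cpow_two_inv hca, ofReal_div, ofReal_natCast, ofReal_natCast,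
    div_div_div_cancel_right₀ ha0] at h_gauss
  refine ((h_prefactor.mul_const _).mul h_gauss).congr' ?_
  filter_upwards [eventually_mem_nhdsWithin] with t ht
  rw [jacobiTheta₂_div_add_I_mul ha hc b ht]
  ring

theorem stmt_11_general {a c : ℕ} {b : ℤ} (ha : 0 < a) (hc : 0 < c) (h : Even (a * c + b)) :
    quadraticGaussSum a b c =
      cexp (2 * π * I / 8) * cexp (-π * I * b ^ 2 / (4 * a * c)) * √((c : ℝ) / a) *
        quadraticGaussSum (-c) (-b) a := by
  have hc0 : (c : ℂ) ≠ 0 := by exact_mod_cast hc.ne'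
  have h_cpow : (I * (c / a : ℝ)) ^ (1 / 2 : ℂ) = √((c : ℝ) / a) * cexp (2 * π * I / 8) := by
    rw [mul_comm, ofReal_mul_cpow (by positivity), ofReal_cpow_half (by positivity),
      cpow_def_of_ne_zero I_ne_zero, log_I]
    congr 2
    ring
  have h_eq := tendsto_nhds_unique
    (tendsto_sqrt_mul_jacobiTheta₂ (a := a) hc h) (tendsto_sqrt_mul_jacobiTheta₂_dual ha hc h)
  rw [h_cpow, ← mul_div_assoc, div_left_inj' hc0] at h_eq
  rw [h_eq]
  ring

/-- The rewritten Gauss sum identity of Section 5: with `ξ_a = exp(2πi/a)`,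
`Σ_{n=1}^{m} ξ_m^{qrn² + (ql+ε)n}
  = ξ_8 · ξ_{16mqr}^{-4(ql+ε)²} · √(m/(2qr)) · Σ_{n=1}^{2qr} ξ_{4qr}^{-mn² - 2(ql+ε)n}`. -/
theorem stmt_11 (m q r : ℕ) (hm : 0 < m) (hq : 0 < q) (hr : 0 < r)
    (l ε : ℤ) (hε : ε = 1 ∨ ε = -1) :
    ∑ n ∈ Finset.Icc 1 m,
        (Complex.exp (2 * Real.pi * Complex.I / m))
          ^ ((q : ℤ) * r * (n : ℤ) ^ 2 + ((q : ℤ) * l + ε) * (n : ℤ))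
      = Complex.exp (2 * Real.pi * Complex.I / 8)
        * (Complex.exp (2 * Real.pi * Complex.I / (16 * m * q * r)))
            ^ (-(4 * ((q : ℤ) * l + ε) ^ 2))
        * ((Real.sqrt ((m : ℝ) / (2 * q * r)) : ℝ) : ℂ)
        * ∑ n ∈ Finset.Icc 1 (2 * q * r),
            (Complex.exp (2 * Real.pi * Complex.I / (4 * q * r)))
              ^ (-(m : ℤ) * (n : ℤ) ^ 2 - 2 * ((q : ℤ) * l + ε) * (n : ℤ)) := by
  have h := stmt_11_general (a := 2 * q * r) (b := 2 * (q * l + ε)) (by positivity) hm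
    ⟨q * r * m + (q * l + ε), by push_cast; ring⟩
  simp only [quadraticGaussSum, quadraticPhase] at h
  simp only [← Complex.exp_int_mul]
  convert h using 4 <;> push_cast <;> field_simp <;> ring_nf
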